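/- Under the stated setup and assumptions, for every p ∈ [1,∞] the Schatten-p norm of the sines of the canonical angles between the column spaces of U_k and Û satisfies (Σ_{j=1}^k sin^p θ_j)^{1/p} ≤ γ_k^{2q} · (‖Σ_⊥‖_p / σ_k) · ‖Ω_2Ω_1†‖₂ (with the maximum of the sines on the left for p = ∞). -/

import Mathlib

open scoped ENNReal
open Matrix

/-- The `j`-th largest singular value (0-indexed) of a complex matrix,
obtained as the decreasingly sorted square roots of the eigenvalues of `Mᴴ * M`. -/
noncomputable def sval {m n : ℕ} (M : Matrix (Fin m) (Fin n) ℂ) (j : ℕ) : ℝ :=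
  (List.insertionSort (· ≥ ·)
    ((List.ofFn (Matrix.isHermitian_conjTranspose_mul_self M).eigenvalues).map Real.sqrt)).getD j 0

/-- The Schatten-`p` norm (`p = ∞` gives the spectral norm). -/
noncomputable def schatten {m n : ℕ} (p : ℝ≥0∞) (M : Matrix (Fin m) (Fin n) ℂ) : ℝ :=
  if p = ⊤ then sval M 0
  else (∑ j ∈ Finset.range n, sval M j ^ p.toReal) ^ (1 / p.toReal)

/-- Moore–Penrose pseudoinverse of a full-row-rank matrix. -/
noncomputable def rpinv {a b : ℕ} (M : Matrix (Fin a) (Fin b) ℂ) : Matrix (Fin b) (Fin a) ℂ :=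
  Mᴴ * (M * Mᴴ)⁻¹

/-- Rectangular diagonal matrix with entries `σ (off), σ (off+1), …` on the diagonal. -/
noncomputable def diagRect (σ : ℕ → ℝ) (off a b : ℕ) : Matrix (Fin a) (Fin b) ℂ :=
  Matrix.of fun i j => if (i : ℕ) = (j : ℕ) then (σ (off + (i : ℕ)) : ℂ) else 0

/-- The first `b` columns of a matrix with `b + c` columns. -/
def colsL {a b c : ℕ} (M : Matrix (Fin a) (Fin (b + c)) ℂ) : Matrix (Fin a) (Fin b) ℂ :=
  M.submatrix id (Fin.castAdd c)

/-- The last `c` columns of a matrix with `b + c` columns. -/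
def colsR {a b c : ℕ} (M : Matrix (Fin a) (Fin (b + c)) ℂ) : Matrix (Fin a) (Fin c) ℂ :=
  M.submatrix id (Fin.natAdd b)

/-!
Write `P = 1 - QQ*` for the complementary projection. It annihilates `Y = (AA*)^q A Ω = QR`, hence
also `Y Ω₁† = U_k Σ_k^{2q+1} + U_⊥ Σ_⊥^{2q} · Σ_⊥ · Ω₂Ω₁†`. Therefore
`P U_k = -(P U_⊥ Σ_⊥^{2q}) · Σ_⊥ · (Ω₂Ω₁† Σ_k^{-(2q+1)})`, and the singular value inequality
`σ_j(LMR) ≤ ‖L‖ ‖R‖ σ_j(M)`, a consequence of the Courant–Fischer principle, bounds each singular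
value of `P U_k` by a fixed multiple of the corresponding singular value of `M = Σ_⊥`.
-/

section CourantFischer

open Module LinearMap

variable {𝕜 E F G H : Type*} [RCLike 𝕜]
  [NormedAddCommGroup E] [InnerProductSpace 𝕜 E] [FiniteDimensional 𝕜 E]
  [NormedAddCommGroup F] [InnerProductSpace 𝕜 F] [FiniteDimensional 𝕜 F]
  [NormedAddCommGroup G] [InnerProductSpace 𝕜 G] [FiniteDimensional 𝕜 G]
  [NormedAddCommGroup H] [InnerProductSpace 𝕜 H] [FiniteDimensional 𝕜 H]

/-- An orthonormal basis of right singular vectors of `T`, i.e. of eigenvectors of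
`adjoint T ∘ₗ T`, in the order of `T.singularValues`. -/
noncomputable def rightSingularBasis (T : E →ₗ[𝕜] F) :
    OrthonormalBasis (Fin (finrank 𝕜 E)) 𝕜 E :=
  T.isSymmetric_adjoint_comp_self.eigenvectorBasis rfl

lemma norm_sq_map_eq_sum_sq_singularValues (T : E →ₗ[𝕜] F) (x : E) :
    ‖T x‖ ^ 2 =
      ∑ i : Fin (finrank 𝕜 E), T.singularValues i ^ 2 * ‖(rightSingularBasis T).repr x i‖ ^ 2 := by
  have hcoord (i) : (rightSingularBasis T).repr ((adjoint T ∘ₗ T) x) i =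
      ((T.singularValues i ^ 2 : ℝ) : 𝕜) * (rightSingularBasis T).repr x i := by
    rw [T.sq_singularValues_fin rfl]
    exact T.isSymmetric_adjoint_comp_self.eigenvectorBasis_apply_self_apply rfl x i
  have hinner : ((‖T x‖ ^ 2 : ℝ) : 𝕜) = inner 𝕜 x ((adjoint T ∘ₗ T) x) := by
    rw [LinearMap.comp_apply, adjoint_inner_right, inner_self_eq_norm_sq_to_K, RCLike.ofReal_pow]
  rw [← (rightSingularBasis T).repr.inner_map_map, PiLp.inner_apply] at hinner
  refine RCLike.ofReal_injective (K := 𝕜) (hinner.trans ?_)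
  rw [RCLike.ofReal_sum]
  refine Finset.sum_congr rfl fun i _ => ?_
  rw [hcoord, RCLike.inner_apply, mul_assoc, RCLike.mul_conj, RCLike.ofReal_mul,
    RCLike.ofReal_pow ‖_‖]

/-- In this Courant–Fischer estimate and the next two, a subspace of codimension at most `j` is
encoded as the kernel of a map to `Fin j → 𝕜`, so that pulling it back along a linear map is
composition. -/
lemma exists_forall_ker_norm_map_le (T : E →ₗ[𝕜] F) (j : ℕ) :
    ∃ φ : E →ₗ[𝕜] (Fin j → 𝕜), ∀ x ∈ ker φ, ‖T x‖ ≤ T.singularValues j * ‖x‖ := by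
  set v := rightSingularBasis T
  refine ⟨LinearMap.pi fun i =>
    if h : (i : ℕ) < finrank 𝕜 E then v.toBasis.coord ⟨i, h⟩ else 0, fun x hx => ?_⟩
  have hx0 (i : Fin (finrank 𝕜 E)) (hi : (i : ℕ) < j) : v.repr x i = 0 := by
    simpa using congrFun (mem_ker.1 hx) ⟨i, hi⟩
  refine le_of_sq_le_sq ?_ (mul_nonneg (T.singularValues_nonneg j) (norm_nonneg x))
  rw [norm_sq_map_eq_sum_sq_singularValues, mul_pow, ← v.repr.norm_map x,
    EuclideanSpace.norm_sq_eq, Finset.mul_sum]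
  refine Finset.sum_le_sum fun i _ => ?_
  rcases lt_or_ge (i : ℕ) j with hi | hi
  · simp [v, hx0 i hi]
  · gcongr
    · exact T.singularValues_nonneg i
    · exact T.singularValues_antitone hi

lemma exists_ne_zero_mem_ker_singularValues_mul_norm_le (T : E →ₗ[𝕜] F) {j : ℕ}
    (hj : j < finrank 𝕜 E) (φ : E →ₗ[𝕜] (Fin j → 𝕜)) :
    ∃ x ∈ ker φ, x ≠ 0 ∧ T.singularValues j * ‖x‖ ≤ ‖T x‖ := by
  set v := rightSingularBasis T
  let ψ : E →ₗ[𝕜] (Finset.Ioi (⟨j, hj⟩ : Fin (finrank 𝕜 E)) → 𝕜) :=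
    LinearMap.pi fun i => v.toBasis.coord i
  have hker : ker (φ.prod ψ) ≠ ⊥ := by
    apply ker_ne_bot_of_finrank_lt
    simp only [finrank_prod, finrank_fintype_fun_eq_card, Fintype.card_coe, Fin.card_Ioi,
      Fintype.card_fin]
    omega
  obtain ⟨x, hx, hx0⟩ := (Submodule.ne_bot_iff _).1 hker
  rw [ker_prod, Submodule.mem_inf] at hx
  have hxv (i : Fin (finrank 𝕜 E)) (hi : j < i) : v.repr x i = 0 := by
    simpa [ψ] using congrFun (mem_ker.1 hx.2) ⟨i, Finset.mem_Ioi.2 hi⟩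
  refine ⟨x, hx.1, hx0, le_of_sq_le_sq ?_ (norm_nonneg _)⟩
  rw [norm_sq_map_eq_sum_sq_singularValues, mul_pow, ← v.repr.norm_map x,
    EuclideanSpace.norm_sq_eq, Finset.mul_sum]
  refine Finset.sum_le_sum fun i _ => ?_
  rcases lt_or_ge j (i : ℕ) with hi | hi
  · simp [v, hxv i hi]
  · gcongr
    · exact T.singularValues_nonneg j
    · exact T.singularValues_antitone hi

lemma singularValues_le_of_forall_ker (T : E →ₗ[𝕜] F) {j : ℕ} (φ : E →ₗ[𝕜] (Fin j → 𝕜)) {c : ℝ}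
    (hc : 0 ≤ c) (h : ∀ x ∈ ker φ, ‖T x‖ ≤ c * ‖x‖) : T.singularValues j ≤ c := by
  rcases le_or_gt (finrank 𝕜 E) j with hj | hj
  · rwa [T.singularValues_of_finrank_le hj]
  · obtain ⟨x, hx, hx0, hle⟩ := exists_ne_zero_mem_ker_singularValues_mul_norm_le T hj φ
    exact le_of_mul_le_mul_right (hle.trans (h x hx)) (norm_pos_iff.2 hx0)

lemma norm_map_le_singularValues_zero_mul (T : E →ₗ[𝕜] F) (x : E) :
    ‖T x‖ ≤ T.singularValues 0 * ‖x‖ :=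
  let ⟨_, hφ⟩ := exists_forall_ker_norm_map_le T 0
  hφ x (mem_ker.2 (Subsingleton.elim _ _))

lemma singularValues_comp_comp_le (L : F →L[𝕜] G) (T : E →ₗ[𝕜] F) (R : H →L[𝕜] E) (j : ℕ) :
    ((L : F →ₗ[𝕜] G) ∘ₗ T ∘ₗ (R : H →ₗ[𝕜] E)).singularValues j ≤
      ‖L‖ * ‖R‖ * T.singularValues j := by
  have hT := T.singularValues_nonneg j
  obtain ⟨φ, hφ⟩ := exists_forall_ker_norm_map_le T j
  refine singularValues_le_of_forall_ker _ (φ ∘ₗ (R : H →ₗ[𝕜] E)) (by positivity) fun x hx => ?_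
  calc ‖L (T (R x))‖ ≤ ‖L‖ * (T.singularValues j * (‖R‖ * ‖x‖)) := by
        grw [L.le_opNorm, hφ (R x) hx, R.le_opNorm]
    _ = ‖L‖ * ‖R‖ * T.singularValues j * ‖x‖ := by ring

end CourantFischer

section L2Operator

open scoped Matrix.Norms.L2Operator

section SingularValues

variable {a b m n : ℕ}

lemma insertionSort_ofFn_comp_perm {f : Fin n → ℝ} (hf : Antitone f) (τ : Equiv.Perm (Fin n)) :
    (List.ofFn (f ∘ τ)).insertionSort (· ≥ ·) = List.ofFn f :=
  List.Perm.eq_of_pairwise' (r := (· ≥ ·)) (List.pairwise_insertionSort _ _)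
    (List.pairwise_ofFn.2 fun _ _ hij => hf hij.le)
    ((List.perm_insertionSort _ _).trans (τ.ofFn_comp_perm f))

lemma exists_perm_sqrt_eigenvalues_eq_singularValues (M : Matrix (Fin m) (Fin n) ℂ) :
    ∃ τ : Equiv.Perm (Fin n), ∀ i,
      √((isHermitian_conjTranspose_mul_self M).eigenvalues i) =
        (toEuclideanLin M).singularValues (τ i) := by
  have hgram : toEuclideanLin (Mᴴ * M) =
      LinearMap.adjoint (toEuclideanLin M) ∘ₗ toEuclideanLin M := by
    rw [toLpLin_mul_same, toEuclideanLin_conjTranspose_eq_adjoint]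
  refine ⟨(Fintype.equivOfCardEq (Fintype.card_fin _)).symm.trans
    (finCongr (Fintype.card_fin n)), fun i => ?_⟩
  simp only [IsHermitian.eigenvalues, IsHermitian.eigenvalues₀, hgram]
  exact (LinearMap.singularValues_fin _ finrank_euclideanSpace _).symm

lemma sval_eq_singularValues (M : Matrix (Fin m) (Fin n) ℂ) (j : ℕ) :
    sval M j = (toEuclideanLin M).singularValues j := by
  obtain ⟨τ, hτ⟩ := exists_perm_sqrt_eigenvalues_eq_singularValues M
  have hf : Antitone fun i : Fin n => (toEuclideanLin M).singularValues i :=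
    fun _ _ hij => LinearMap.singularValues_antitone _ hij
  have hsort : sval M j =
      (List.ofFn fun i : Fin n => (toEuclideanLin M).singularValues i).getD j 0 := by
    rw [← insertionSort_ofFn_comp_perm hf τ, sval, List.map_ofFn]
    exact congrArg (fun g => ((List.ofFn g).insertionSort (· ≥ ·)).getD j 0) (funext hτ)
  rcases lt_or_ge j n with hj | hj
  · rw [hsort, List.getD_eq_getElem _ _ (by simpa using hj), List.getElem_ofFn]
  · rw [hsort, List.getD_eq_default _ _ (by simpa using hj),
      LinearMap.singularValues_of_finrank_le _ (by simpa using hj)]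

lemma sval_nonneg (M : Matrix (Fin m) (Fin n) ℂ) (j : ℕ) : 0 ≤ sval M j := by
  rw [sval_eq_singularValues]
  exact LinearMap.singularValues_nonneg _ j

lemma sval_eq_zero_of_le (M : Matrix (Fin m) (Fin n) ℂ) {j : ℕ} (hj : n ≤ j) : sval M j = 0 := by
  rw [sval_eq_singularValues]
  exact LinearMap.singularValues_of_finrank_le _ (by simpa using hj)

lemma l2_opNorm_le_sval_zero (M : Matrix (Fin m) (Fin n) ℂ) : ‖M‖ ≤ sval M 0 := by
  rw [l2_opNorm_def]
  refine ContinuousLinearMap.opNorm_le_bound _ (sval_nonneg M 0) fun x => ?_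
  rw [sval_eq_singularValues]
  exact norm_map_le_singularValues_zero_mul (toEuclideanLin M) x

lemma sval_mul_mul_le (L : Matrix (Fin a) (Fin m) ℂ) (M : Matrix (Fin m) (Fin n) ℂ)
    (R : Matrix (Fin n) (Fin b) ℂ) (j : ℕ) :
    sval (L * M * R) j ≤ ‖L‖ * ‖R‖ * sval M j := by
  rw [sval_eq_singularValues, sval_eq_singularValues, Matrix.mul_assoc, toLpLin_mul_same,
    toLpLin_mul_same]
  exact singularValues_comp_comp_le (LinearMap.toContinuousLinearMap (toEuclideanLin L))
    (toEuclideanLin M) (LinearMap.toContinuousLinearMap (toEuclideanLin R)) j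

end SingularValues

section Schatten

variable {a b c d : ℕ} {p : ℝ≥0∞}

lemma schatten_eq_sum_range (hp : 0 < p) (hp' : p ≠ ⊤) (M : Matrix (Fin a) (Fin b) ℂ) {n : ℕ}
    (hn : b ≤ n) :
    schatten p M = (∑ j ∈ Finset.range n, sval M j ^ p.toReal) ^ (1 / p.toReal) := by
  rw [schatten, if_neg hp']
  congr 1
  refine Finset.sum_subset (Finset.range_subset_range.2 hn) fun j _ hj => ?_
  rw [sval_eq_zero_of_le M (by simpa using hj),
    Real.zero_rpow (ENNReal.toReal_pos hp.ne' hp').ne']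

lemma schatten_le_mul_schatten {M : Matrix (Fin a) (Fin b) ℂ} {N : Matrix (Fin c) (Fin d) ℂ}
    {t : ℝ} (ht : 0 ≤ t) (h : ∀ j, sval M j ≤ t * sval N j) (hp : 0 < p) :
    schatten p M ≤ t * schatten p N := by
  rcases eq_or_ne p ⊤ with rfl | hp'
  · simpa only [schatten, if_true] using h 0
  have hp0 : 0 < p.toReal := ENNReal.toReal_pos hp.ne' hp'
  have hM j := sval_nonneg M j
  have hN j := sval_nonneg N j
  rw [schatten_eq_sum_range hp hp' M (le_max_left b d),
    schatten_eq_sum_range hp hp' N (le_max_right b d)]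
  set s := Finset.range (max b d)
  calc (∑ j ∈ s, sval M j ^ p.toReal) ^ (1 / p.toReal)
      ≤ (∑ j ∈ s, (t * sval N j) ^ p.toReal) ^ (1 / p.toReal) := by
        gcongr
        exacts [Finset.sum_nonneg fun j _ => Real.rpow_nonneg (hM j) _, hM _, h _]
    _ = (t ^ p.toReal * ∑ j ∈ s, sval N j ^ p.toReal) ^ (1 / p.toReal) := by
        simp only [Real.mul_rpow ht (hN _), Finset.mul_sum]
    _ = t * (∑ j ∈ s, sval N j ^ p.toReal) ^ (1 / p.toReal) := by
        rw [Real.mul_rpow (Real.rpow_nonneg ht _)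
            (Finset.sum_nonneg fun j _ => Real.rpow_nonneg (hN j) _),
          ← Real.rpow_mul ht, mul_one_div_cancel hp0.ne', Real.rpow_one]

lemma schatten_nonneg (p : ℝ≥0∞) (M : Matrix (Fin a) (Fin b) ℂ) : 0 ≤ schatten p M := by
  unfold schatten
  split_ifs
  · exact sval_nonneg M 0
  · exact Real.rpow_nonneg (Finset.sum_nonneg fun j _ => Real.rpow_nonneg (sval_nonneg M j) _) _

lemma schatten_mul_mul_le (hp : 0 < p) (L : Matrix (Fin a) (Fin b) ℂ)
    (M : Matrix (Fin b) (Fin c) ℂ) (R : Matrix (Fin c) (Fin d) ℂ) :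
    schatten p (L * M * R) ≤ ‖L‖ * ‖R‖ * schatten p M :=
  schatten_le_mul_schatten (by positivity) (sval_mul_mul_le L M R) hp

end Schatten

section L2OpNorm

variable {𝕜 m n : Type*} [RCLike 𝕜] [Fintype m] [Fintype n] [DecidableEq n]

lemma l2_opNorm_diagonal_le {v : n → 𝕜} {c : ℝ} (hc : 0 ≤ c) (h : ∀ i, ‖v i‖ ≤ c) :
    ‖diagonal v‖ ≤ c := by
  rw [l2_opNorm_diagonal]
  exact (pi_norm_le_iff_of_nonneg hc).2 h

lemma l2_opNorm_le_one_of_conjTranspose_mul_self {M : Matrix m n 𝕜} (h : Mᴴ * M = 1) :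
    ‖M‖ ≤ 1 := by
  have hsq : ‖M‖ * ‖M‖ ≤ 1 := by
    rw [← l2_opNorm_conjTranspose_mul_self, h]
    exact (IsStarProjection.one _).norm_le
  nlinarith

lemma isStarProjection_mul_conjTranspose {M : Matrix m n 𝕜} (h : Mᴴ * M = 1) :
    IsStarProjection (M * Mᴴ) where
  isIdempotentElem := by
    rw [IsIdempotentElem, Matrix.mul_assoc, ← Matrix.mul_assoc Mᴴ, h, Matrix.one_mul]
  isSelfAdjoint := isHermitian_mul_conjTranspose_self M

lemma one_sub_mul_conjTranspose_mul_self [DecidableEq m] {M : Matrix m n 𝕜} (h : Mᴴ * M = 1) :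
    (1 - M * Mᴴ) * M = 0 := by
  rw [Matrix.sub_mul, Matrix.one_mul, Matrix.mul_assoc, h, Matrix.mul_one, sub_self]

end L2OpNorm

section Blocks

variable {a b c : ℕ}

open scoped ComplexOrder in
lemma mul_rpinv {M : Matrix (Fin a) (Fin b) ℂ} (hM : M.rank = a) : M * rpinv M = 1 := by
  have hrange : LinearMap.range (M * Mᴴ).mulVecLin = ⊤ := by
    apply Submodule.eq_top_of_finrank_eq
    rw [← Matrix.rank, rank_self_mul_conjTranspose, hM, Module.finrank_fin_fun]
  have hunit : IsUnit (M * Mᴴ) :=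
    mulVec_surjective_iff_isUnit.1 (LinearMap.range_eq_top.1 hrange)
  rw [rpinv, ← Matrix.mul_assoc, mul_nonsing_inv _ ((isUnit_iff_isUnit_det _).1 hunit)]

lemma colsR_conjTranspose_mul_colsR {M : Matrix (Fin a) (Fin (b + c)) ℂ} (h : Mᴴ * M = 1) :
    (colsR M)ᴴ * colsR M = 1 := by
  rw [colsR, conjTranspose_submatrix, ← submatrix_mul _ _ _ _ _ Function.bijective_id, h]
  exact submatrix_one _ (Fin.natAdd_injective c b)

lemma diagRect_self (σ : ℕ → ℝ) (off : ℕ) :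
    diagRect σ off a a = diagonal fun i : Fin a => (σ (off + i) : ℂ) := by
  ext i j
  simp [diagRect, diagonal_apply, Fin.ext_iff]

lemma exists_diagRect_mul_eq_one {σ : ℕ → ℝ} {s : ℝ} (hs : 0 < s) (hσ : ∀ i < a, s ≤ |σ i|) :
    ∃ E : Matrix (Fin a) (Fin a) ℂ, diagRect σ 0 a a * E = 1 ∧ ‖E‖ ≤ s⁻¹ := by
  refine ⟨diagonal fun i => (σ (0 + i) : ℂ)⁻¹, ?_,
    l2_opNorm_diagonal_le (by positivity) fun i => ?_⟩
  · rw [diagRect_self, diagonal_mul_diagonal, ← diagonal_one]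
    congr 1 with i
    have hσi : 0 < |σ (0 + i)| := hs.trans_le (by simpa using hσ i i.isLt)
    exact mul_inv_cancel₀ (Complex.ofReal_ne_zero.2 (abs_pos.1 hσi))
  · rw [norm_inv, Complex.norm_real, Real.norm_eq_abs]
    gcongr
    simpa using hσ i i.isLt

lemma diagRect_mul (σ τ : ℕ → ℝ) (off : ℕ) :
    diagRect (fun i => σ i * τ i) off a b =
      diagonal (fun i : Fin a => (σ (off + i) : ℂ)) * diagRect τ off a b := by
  ext i j
  simp [diagRect, diagonal_mul]

lemma conjTranspose_diagRect_mul_diagRect (σ τ : ℕ → ℝ) (off : ℕ) :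
    (diagRect σ off a b)ᴴ * diagRect τ off a b =
      diagonal fun j : Fin b => if (j : ℕ) < a then (σ (off + j) * τ (off + j) : ℂ) else 0 := by
  ext i j
  simp only [Matrix.mul_apply, conjTranspose_apply, diagRect, of_apply, diagonal_apply,
    Fin.ext_iff]
  rw [Fin.sum_univ_eq_sum_range fun l => star (if l = (i : ℕ) then (σ (off + l) : ℂ) else 0) *
    if l = (j : ℕ) then (τ (off + l) : ℂ) else 0]
  simp only [apply_ite star, RCLike.star_def, Complex.conj_ofReal, star_zero, mul_ite, ite_mul,
    zero_mul, mul_zero, Finset.sum_ite_eq', Finset.mem_range]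
  grind

lemma diagRect_mul_conjTranspose_mul_diagRect (σ τ : ℕ → ℝ) (off : ℕ) :
    diagRect σ off a b * (diagRect σ off a b)ᴴ * diagRect τ off a b =
      diagRect (fun i => σ i ^ 2 * τ i) off a b := by
  rw [Matrix.mul_assoc, conjTranspose_diagRect_mul_diagRect]
  ext i j
  simp only [mul_diagonal, diagRect, of_apply]
  rcases eq_or_ne (i : ℕ) j with hij | hij
  · rw [if_pos hij, if_pos hij, ← hij, if_pos i.isLt]
    push_cast
    ring
  · rw [if_neg hij, if_neg hij, zero_mul]

lemma mul_diagRect_mul_conjTranspose {k e f : ℕ} (σ : ℕ → ℝ)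
    (U : Matrix (Fin a) (Fin (k + e)) ℂ) (V : Matrix (Fin b) (Fin (k + f)) ℂ) :
    U * diagRect σ 0 (k + e) (k + f) * Vᴴ =
      colsL U * diagRect σ 0 k k * (colsL V)ᴴ + colsR U * diagRect σ k e f * (colsR V)ᴴ := by
  have hne (i : Fin k) (j : ℕ) : (i : ℕ) ≠ k + j := by omega
  ext i j
  simp [Matrix.mul_apply, Fin.sum_univ_add, diagRect, colsL, colsR, hne, (hne _ _).symm]

lemma gram_pow_mul_of_svd {m n : ℕ} {U : Matrix (Fin a) (Fin m) ℂ} {V : Matrix (Fin b) (Fin n) ℂ}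
    (hU : Uᴴ * U = 1) (hV : Vᴴ * V = 1) {σ : ℕ → ℝ} {A : Matrix (Fin a) (Fin b) ℂ}
    (hA : A = U * diagRect σ 0 m n * Vᴴ) (q : ℕ) :
    (A * Aᴴ) ^ q * A = U * diagRect (fun i => σ i ^ (2 * q) * σ i) 0 m n * Vᴴ := by
  induction q with
  | zero => simpa using hA
  | succ q ih =>
    have hσ : (fun i => σ i ^ (2 * (q + 1)) * σ i) = fun i => σ i ^ 2 * (σ i ^ (2 * q) * σ i) := by
      funext i
      ring
    rw [pow_succ', Matrix.mul_assoc, ih, hσ, ← diagRect_mul_conjTranspose_mul_diagRect, hA]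
    set D := diagRect σ 0 m n
    calc U * D * Vᴴ * (U * D * Vᴴ)ᴴ * (U * diagRect (fun i => σ i ^ (2 * q) * σ i) 0 m n * Vᴴ)
        = U * D * (Vᴴ * V) * Dᴴ * (Uᴴ * U) *
            diagRect (fun i => σ i ^ (2 * q) * σ i) 0 m n * Vᴴ := by
          simp only [conjTranspose_mul, conjTranspose_conjTranspose, Matrix.mul_assoc]
      _ = _ := by
          simp only [hU, hV, Matrix.mul_one, Matrix.mul_assoc]

end Blocks

section SubspaceIteration

variable {k e f a b ℓ r : ℕ}

lemma schatten_mul_le_of_mul_add_eq_zero {P : Matrix (Fin a) (Fin b) ℂ}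
    {U : Matrix (Fin b) (Fin k) ℂ} {S S' : Matrix (Fin k) (Fin k) ℂ} {Z : Matrix (Fin b) (Fin e) ℂ}
    {T : Matrix (Fin e) (Fin f) ℂ} {W : Matrix (Fin f) (Fin k) ℂ} (hSS' : S * S' = 1)
    (hP : P * (U * S + Z * T * W) = 0) {p : ℝ≥0∞} (hp : 0 < p) :
    schatten p (P * U) ≤ ‖P * Z‖ * ‖W * S'‖ * schatten p T := by
  have hPU : P * U = -(P * Z) * T * (W * S') :=
    calc P * U = P * (U * S) * S' := by
          rw [Matrix.mul_assoc, Matrix.mul_assoc U, hSS', Matrix.mul_one]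
      _ = -(P * Z) * T * (W * S') := by
          rw [Matrix.mul_add] at hP
          rw [eq_neg_of_add_eq_zero_left hP]
          simp only [Matrix.neg_mul, Matrix.mul_assoc]
  rw [hPU, ← norm_neg (P * Z)]
  exact schatten_mul_mul_le hp _ _ _

variable {U : Matrix (Fin a) (Fin (k + e)) ℂ}
  {V : Matrix (Fin b) (Fin (k + f)) ℂ} {σ : ℕ → ℝ} {A : Matrix (Fin a) (Fin b) ℂ}
  {Ω : Matrix (Fin b) (Fin ℓ) ℂ} {X : Matrix (Fin ℓ) (Fin k) ℂ}

lemma gram_pow_mul_mul_of_svd (hU : Uᴴ * U = 1) (hV : Vᴴ * V = 1)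
    (hA : A = U * diagRect σ 0 (k + e) (k + f) * Vᴴ) (hX : (colsL V)ᴴ * Ω * X = 1) (q : ℕ) :
    (A * Aᴴ) ^ q * A * Ω * X =
      colsL U * diagRect (fun i => σ i ^ (2 * q) * σ i) 0 k k +
        colsR U * diagonal (fun i : Fin e => ((σ (k + i) ^ (2 * q) : ℝ) : ℂ)) *
          diagRect σ k e f * ((colsR V)ᴴ * Ω * X) := by
  rw [gram_pow_mul_of_svd hU hV hA, mul_diagRect_mul_conjTranspose, diagRect_mul _ _ k]
  set S := diagRect (fun i => σ i ^ (2 * q) * σ i) 0 k k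
  calc _ = colsL U * S * ((colsL V)ᴴ * Ω * X) + _ := by
        simp only [Matrix.add_mul, Matrix.mul_assoc]
        rfl
    _ = _ := by
        simp only [hX, Matrix.mul_one, Matrix.mul_assoc]

theorem schatten_angles_left_general (q : ℕ) (hU : Uᴴ * U = 1) (hV : Vᴴ * V = 1)
    (hA : A = U * diagRect σ 0 (k + e) (k + f) * Vᴴ) {s t : ℝ} (hs : 0 < s)
    (hσs : ∀ i < k, s ≤ |σ i|) (hσt : ∀ i, |σ (k + i)| ≤ t) (hX : (colsL V)ᴴ * Ω * X = 1)
    {Q : Matrix (Fin a) (Fin r) ℂ} {R : Matrix (Fin r) (Fin ℓ) ℂ} (hQ : Qᴴ * Q = 1)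
    (hQR : (A * Aᴴ) ^ q * A * Ω = Q * R) {p : ℝ≥0∞} (hp : 0 < p) :
    schatten p ((1 - Q * Qᴴ) * colsL U) ≤
      (t / s) ^ (2 * q) * (schatten p (diagRect σ k e f) / s) * sval ((colsR V)ᴴ * Ω * X) 0 := by
  have ht : 0 ≤ t := (abs_nonneg _).trans (hσt 0)
  have hPY : (1 - Q * Qᴴ) * ((A * Aᴴ) ^ q * A * Ω * X) = 0 := by
    rw [hQR, Matrix.mul_assoc, ← Matrix.mul_assoc (1 - Q * Qᴴ),
      one_sub_mul_conjTranspose_mul_self hQ, Matrix.zero_mul]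
  rw [gram_pow_mul_mul_of_svd hU hV hA hX] at hPY
  obtain ⟨S', hSS', hS'_norm⟩ :=
    exists_diagRect_mul_eq_one (a := k) (σ := fun i => σ i ^ (2 * q) * σ i)
      (s := s ^ (2 * q) * s) (by positivity) fun i hi => by
        rw [abs_mul, abs_pow]
        gcongr <;> exact hσs i hi
  have hbound := schatten_mul_le_of_mul_add_eq_zero hSS' hPY hp
  set W := (colsR V)ᴴ * Ω * X
  set D := diagonal fun i : Fin e => ((σ (k + i) ^ (2 * q) : ℝ) : ℂ)
  have hD_norm : ‖D‖ ≤ t ^ (2 * q) := l2_opNorm_diagonal_le (by positivity) fun i => by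
    rw [Complex.norm_real, norm_pow, Real.norm_eq_abs]
    gcongr
    exact hσt i
  have hZ_norm : ‖(1 - Q * Qᴴ) * (colsR U * D)‖ ≤ 1 * (1 * t ^ (2 * q)) := by
    grw [l2_opNorm_mul, l2_opNorm_mul, (isStarProjection_mul_conjTranspose hQ).one_sub.norm_le,
      l2_opNorm_le_one_of_conjTranspose_mul_self (colsR_conjTranspose_mul_colsR hU), hD_norm]
  have hT := schatten_nonneg p (diagRect σ k e f)
  have hW := sval_nonneg W 0
  calc schatten p ((1 - Q * Qᴴ) * colsL U)
      ≤ 1 * (1 * t ^ (2 * q)) * (sval W 0 * (s ^ (2 * q) * s)⁻¹) *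
          schatten p (diagRect σ k e f) := by
        grw [hbound, hZ_norm, l2_opNorm_mul, l2_opNorm_le_sval_zero, hS'_norm]
    _ = (t / s) ^ (2 * q) * (schatten p (diagRect σ k e f) / s) * sval W 0 := by
        rw [div_pow]
        field_simp

end SubspaceIteration

end L2Operator

/-- Theorem 3.3 (left): Schatten-p norm bound for the sines of the canonical angles
between the column spaces of `U_k` and `Û`. -/
theorem schatten_angles_left
    {k m₂ n₂ ρ : ℕ} (q : ℕ) (hk : 1 ≤ k)
    (A : Matrix (Fin (k + m₂)) (Fin (k + n₂)) ℂ)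
    (U : Matrix (Fin (k + m₂)) (Fin (k + m₂)) ℂ)
    (V : Matrix (Fin (k + n₂)) (Fin (k + n₂)) ℂ)
    (σ : ℕ → ℝ)
    (hU : Uᴴ * U = 1) (hU' : U * Uᴴ = 1)
    (hV : Vᴴ * V = 1) (hV' : V * Vᴴ = 1)
    (hσ0 : ∀ i, 0 ≤ σ i) (hσm : ∀ i j, i ≤ j → σ j ≤ σ i)
    (hA : A = U * diagRect σ 0 (k + m₂) (k + n₂) * Vᴴ)
    (hrank : 0 < σ (k - 1)) (hgap : σ k < σ (k - 1))
    (Ω : Matrix (Fin (k + n₂)) (Fin (k + ρ)) ℂ)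
    (hΩ : ((colsL V)ᴴ * Ω).rank = k)
    (Q : Matrix (Fin (k + m₂)) (Fin (k + ρ)) ℂ)
    (R : Matrix (Fin (k + ρ)) (Fin (k + ρ)) ℂ)
    (hQ : Qᴴ * Q = 1) (hR : R.BlockTriangular id)
    (hQR : (A * Aᴴ) ^ q * A * Ω = Q * R)
    (UB : Matrix (Fin (k + ρ)) (Fin (k + ρ)) ℂ)
    (Vh : Matrix (Fin (k + n₂)) (Fin (k + ρ)) ℂ)
    (σh : ℕ → ℝ)
    (hUB : UBᴴ * UB = 1) (hUB' : UB * UBᴴ = 1)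
    (hVh : Vhᴴ * Vh = 1)
    (hσh0 : ∀ i, 0 ≤ σh i) (hσhm : ∀ i j, i ≤ j → σh j ≤ σh i)
    (hB : Qᴴ * A = UB * diagRect σh 0 (k + ρ) (k + ρ) * Vhᴴ)
    :
    ∀ p : ℝ≥0∞, 1 ≤ p →
      schatten p ((1 - Q * UB * (Q * UB)ᴴ) * colsL U) ≤
        (σ k / σ (k - 1)) ^ (2 * q) * (schatten p (diagRect σ k m₂ n₂) / σ (k - 1)) * sval ((colsR V)ᴴ * Ω * rpinv ((colsL V)ᴴ * Ω)) 0 := by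
  intro p hp
  have hQ' : (Q * UB)ᴴ * (Q * UB) = 1 := by
    rw [conjTranspose_mul, Matrix.mul_assoc, ← Matrix.mul_assoc Qᴴ, hQ, Matrix.one_mul, hUB]
  have hQR' : (A * Aᴴ) ^ q * A * Ω = Q * UB * (UBᴴ * R) := by
    rw [hQR, Matrix.mul_assoc Q, ← Matrix.mul_assoc UB, hUB', Matrix.one_mul]
  exact schatten_angles_left_general q hU hV hA hrank
    (fun i hi => (hσm i (k - 1) (by omega)).trans (le_abs_self _))
    (fun i => (abs_of_nonneg (hσ0 _)).trans_le (hσm k (k + i) (by omega)))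
    (mul_rpinv hΩ) hQ' hQR' (zero_lt_one.trans_le hp)
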